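/- For every d×d density matrix ρ, every normalized coherence witness W, and every incoherent unitary U, the mean value of W after the unitary is bounded by the l1-norm of coherence of the initial state: tr(W U ρ U†) ≤ C_{l1}(ρ). -/

import Mathlib

open scoped ComplexOrder

/-- A d×d density matrix: positive semidefinite with trace 1. -/
def IsDensityMatrix {d : ℕ} (ρ : Matrix (Fin d) (Fin d) ℂ) : Prop :=
  ρ.PosSemidef ∧ ρ.trace = 1

/-- The `l₁`-norm of coherence: the sum of the moduli of the off-diagonal
entries. -/
noncomputable def Cl1 {d : ℕ} (ρ : Matrix (Fin d) (Fin d) ℂ) : ℝ :=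
  ∑ i, ∑ j, if i = j then 0 else ‖ρ i j‖

/-- A normalized coherence witness: Hermitian, all diagonal entries zero, and
all off-diagonal entries of modulus 1. -/
def IsNormalizedWitness {d : ℕ} (W : Matrix (Fin d) (Fin d) ℂ) : Prop :=
  W.IsHermitian ∧ (∀ i, W i i = 0) ∧ ∀ i j, i ≠ j → ‖W i j‖ = 1

/-- An incoherent unitary: a unitary matrix whose entries are
`U i j = e^{iλ_j} δ_{i, f(j)}` for a permutation `f` and real phases `λ_j`. -/
def IsIncoherentUnitary {d : ℕ} (U : Matrix (Fin d) (Fin d) ℂ) : Prop :=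
  U ∈ Matrix.unitaryGroup (Fin d) ℂ ∧
  ∃ (f : Equiv.Perm (Fin d)) (lam : Fin d → ℝ),
    ∀ i j, U i j = if i = f j then Complex.exp (Complex.I * lam j) else 0

theorem norm_trace_mul_le {m n R : Type*} [Fintype m] [Fintype n] [NonUnitalSeminormedRing R]
    (A : Matrix m n R) (B : Matrix n m R) :
    ‖(A * B).trace‖ ≤ ∑ i, ∑ j, ‖A j i‖ * ‖B i j‖ :=
  calc ‖(A * B).trace‖ = ‖∑ j, ∑ i, A j i * B i j‖ := rfl
    _ ≤ ∑ j, ∑ i, ‖A j i‖ * ‖B i j‖ :=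
      norm_sum_le_of_le _ fun _ _ => norm_sum_le_of_le _ fun _ _ => norm_mul_le _ _
    _ = ∑ i, ∑ j, ‖A j i‖ * ‖B i j‖ := Finset.sum_comm

theorem monomial_mul_mul_conjTranspose_apply {m n R : Type*} [Fintype n] [DecidableEq m]
    [NonUnitalSemiring R] [StarRing R] {U : Matrix m n R} {f : n → m}
    (hf : Function.Injective f) {c : n → R} (hU : ∀ i j, U i j = if i = f j then c j else 0)
    (A : Matrix n n R) (i j : n) :
    (U * A * U.conjTranspose) (f i) (f j) = c i * A i j * star (c j) := by
  classical
  simp [Matrix.mul_apply, hU, hf.eq_iff, apply_ite star]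

section Coherence

variable {d : ℕ} {W U : Matrix (Fin d) (Fin d) ℂ}

theorem norm_trace_mul_le_Cl1 (hW_diag : ∀ i, W i i = 0)
    (hW_off : ∀ i j, i ≠ j → ‖W i j‖ ≤ 1) (A : Matrix (Fin d) (Fin d) ℂ) :
    ‖(W * A).trace‖ ≤ Cl1 A := by
  refine (norm_trace_mul_le W A).trans ?_
  refine Finset.sum_le_sum fun i _ => Finset.sum_le_sum fun j _ => ?_
  split_ifs with hij
  · simp [hij, hW_diag]
  · exact mul_le_of_le_one_left (norm_nonneg _) (hW_off j i (Ne.symm hij))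

theorem Cl1_eq_of_norm_apply_perm_eq {A B : Matrix (Fin d) (Fin d) ℂ} (f : Equiv.Perm (Fin d))
    (h : ∀ i j, ‖A (f i) (f j)‖ = ‖B i j‖) : Cl1 A = Cl1 B := by
  simp only [Cl1, ← h]
  rw [← Equiv.sum_comp f]
  refine Finset.sum_congr rfl fun i _ => ?_
  rw [← Equiv.sum_comp f]
  simp only [f.injective.eq_iff]

theorem IsIncoherentUnitary.Cl1_mul_mul_conjTranspose (hU : IsIncoherentUnitary U)
    (ρ : Matrix (Fin d) (Fin d) ℂ) : Cl1 (U * ρ * U.conjTranspose) = Cl1 ρ := by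
  obtain ⟨-, f, lam, hU_apply⟩ := hU
  refine Cl1_eq_of_norm_apply_perm_eq f fun i j => ?_
  rw [monomial_mul_mul_conjTranspose_apply f.injective hU_apply, norm_mul, norm_mul, norm_star,
    Complex.norm_exp_I_mul_ofReal, Complex.norm_exp_I_mul_ofReal, one_mul, mul_one]

theorem witness_mean_value_after_incoherent_unitary_le_Cl1_general
    (ρ : Matrix (Fin d) (Fin d) ℂ) (hW_diag : ∀ i, W i i = 0)
    (hW_off : ∀ i j, i ≠ j → ‖W i j‖ ≤ 1) (hU : IsIncoherentUnitary U) :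
    ‖(W * (U * ρ * U.conjTranspose)).trace‖ ≤ Cl1 ρ :=
  (norm_trace_mul_le_Cl1 hW_diag hW_off _).trans_eq (hU.Cl1_mul_mul_conjTranspose ρ)

end Coherence

/-- For every density matrix `ρ`, normalized coherence witness `W` and
incoherent unitary `U`, the mean value of `W` after the unitary is bounded by
the l₁-norm of coherence of the initial state:
`tr (W U ρ U†) ≤ C_{l1}(ρ)`. -/
theorem witness_mean_value_after_incoherent_unitary_le_Cl1 (d : ℕ)
    (ρ : Matrix (Fin d) (Fin d) ℂ) (hρ : IsDensityMatrix ρ)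
    (W : Matrix (Fin d) (Fin d) ℂ) (hW : IsNormalizedWitness W)
    (U : Matrix (Fin d) (Fin d) ℂ) (hU : IsIncoherentUnitary U) :
    ((W * (U * ρ * U.conjTranspose)).trace).re ≤ Cl1 ρ := by
  exact (Complex.re_le_norm _).trans <| witness_mean_value_after_incoherent_unitary_le_Cl1_general
    ρ hW.2.1 (fun i j hij => (hW.2.2 i j hij).le) hU
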